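/- Let $I$ be an associative algebra (possibly without identity) over a field $k$, and let $K$ be a two-sided ideal of the unitization $k\ltimes_d I$ (with multiplication $(\alpha,x)(\beta,y)=(\alpha\beta,\alpha y+\beta x+xy)$). Then exactly one of the following holds: (a) $K=\{0\}\times L$ for some two-sided ideal $L$ of $I$; (b) $K=k\ltimes_d I$; (c) $K=\{(\alpha,-x) : x\in J,\ \varphi(x)=\alpha\}$ where $J$ is a subalgebra of $I$ and $\varphi:J\to k$ is a surjective algebra homomorphism such that $\varphi(x)=\alpha$ implies $\varphi(\alpha y-xy)=\varphi(\alpha y-yx)=0$ for all $y\in I$ (with $\alpha y-xy,\alpha y-yx\in J$). -/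

import Mathlib

/-- The multiplication of the unitization `k ⋉ I` of a nonunital algebra `I`. -/
def unitMul {k : Type*} [Field k] {I : Type*} [AddCommGroup I] [Module k I]
    (mI : I →ₗ[k] I →ₗ[k] I) (p q : k × I) : k × I :=
  (p.1 * q.1, p.1 • q.2 + q.1 • p.2 + mI p.2 q.2)

theorem stmt7 {k : Type*} [Field k] {I : Type*} [AddCommGroup I] [Module k I]
    (mI : I →ₗ[k] I →ₗ[k] I)
    (hI : ∀ x y z : I, mI (mI x y) z = mI x (mI y z))
    -- `K` is a two-sided ideal of the unitization `k ⋉ I`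
    (K : Submodule k (k × I))
    (hK : ∀ p ∈ K, ∀ q : k × I, unitMul mI p q ∈ K ∧ unitMul mI q p ∈ K) :
    -- then exactly one of the following three cases holds
    let Pa : Prop := ∃ L : Submodule k I,
      (∀ x ∈ L, ∀ y : I, mI x y ∈ L ∧ mI y x ∈ L) ∧
      K = Submodule.map (LinearMap.inr k k I) L
    let Pb : Prop := K = ⊤
    let Pc : Prop := ∃ J : Submodule k I, ∃ φ : ↥J →ₗ[k] k,
      Function.Surjective φ ∧
      -- `φ` is an algebra homomorphism (in particular `J` is a subalgebra)
      (∀ x y : ↥J, ∃ h : mI ↑x ↑y ∈ J, φ ⟨mI ↑x ↑y, h⟩ = φ x * φ y) ∧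
      -- `φ(x) = α` implies `φ(αy - xy) = φ(αy - yx) = 0` for all `y ∈ I`
      (∀ x : ↥J, ∀ y : I,
        (∃ h : φ x • y - mI ↑x y ∈ J, φ ⟨φ x • y - mI ↑x y, h⟩ = 0) ∧
        (∃ h : φ x • y - mI y ↑x ∈ J, φ ⟨φ x • y - mI y ↑x, h⟩ = 0)) ∧
      (K : Set (k × I)) = {p | ∃ h : -p.2 ∈ J, φ ⟨-p.2, h⟩ = p.1}
    (Pa ∧ ¬Pb ∧ ¬Pc) ∨ (¬Pa ∧ Pb ∧ ¬Pc) ∨ (¬Pa ∧ ¬Pb ∧ Pc) := by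
  intro Pa Pb Pc
  have ha : Pa → ∀ p ∈ K, p.1 = 0 := by
    rintro ⟨L, -, hL⟩ p hp
    rw [hL] at hp
    obtain ⟨x, -, rfl⟩ := hp
    rfl
  have hc : Pc → (∃ x : I, ((1 : k), x) ∈ K) ∧ ((1 : k), (0 : I)) ∉ K := by
    rintro ⟨J, φ, hs, -, -, hKJ⟩
    have hm : ∀ p : k × I, p ∈ K ↔ ∃ h : -p.2 ∈ J, φ ⟨-p.2, h⟩ = p.1 := by
      intro p
      rw [← SetLike.mem_coe, hKJ]
      rfl
    constructor
    · obtain ⟨x, hx⟩ := hs 1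
      refine ⟨-x.1, (hm _).2 ⟨by simp, ?_⟩⟩
      simpa using hx
    · intro h
      obtain ⟨h1, h2⟩ := (hm _).1 h
      have h3 : (⟨-((1 : k), (0 : I)).2, h1⟩ : J) = 0 := by
        ext
        simp
      rw [h3, map_zero] at h2
      exact zero_ne_one h2
  by_cases h1 : ((1 : k), (0 : I)) ∈ K
  · refine Or.inr (Or.inl ⟨fun h => one_ne_zero (ha h _ h1), ?_, fun h => (hc h).2 h1⟩)
    refine Submodule.eq_top_iff'.2 fun p => ?_
    simpa [unitMul] using (hK _ h1 p).1
  have hb : ¬ Pb := fun h => h1 (by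
    have h' : K = ⊤ := h
    rw [h']
    trivial)
  by_cases h0 : ∀ p ∈ K, p.1 = 0
  · refine Or.inl ⟨⟨K.comap (LinearMap.inr k k I), ?_, ?_⟩, hb, ?_⟩
    · intro x hx y
      have := hK _ hx (0, y)
      simpa [unitMul] using this
    · ext ⟨a, x⟩
      constructor
      · intro h
        have h2 : a = 0 := h0 _ h
        subst h2
        exact ⟨x, h, rfl⟩
      · rintro ⟨y, hy, h⟩
        rw [← h]
        exact hy
    · intro h
      obtain ⟨x, hx⟩ := (hc h).1
      exact one_ne_zero (h0 _ hx)
  refine Or.inr (Or.inr ⟨fun h => h0 (ha h), hb, ?_⟩)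
  have huniq : ∀ (a b : k) (x : I), (a, x) ∈ K → (b, x) ∈ K → a = b := by
    intro a b x hxa hxb
    by_contra hne
    have h2 := K.smul_mem (a - b)⁻¹ (K.sub_mem hxa hxb)
    apply h1
    simpa [inv_mul_cancel₀ (sub_ne_zero.2 hne)] using h2
  let J : Submodule k I := K.map (-LinearMap.snd k k I)
  have hJ : ∀ x : I, x ∈ J ↔ ∃ a : k, (a, -x) ∈ K := by
    intro x
    constructor
    · rintro ⟨⟨a, y⟩, h, rfl⟩
      exact ⟨a, by simpa using h⟩
    · rintro ⟨a, h⟩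
      exact ⟨_, h, by simp⟩
  choose g hg using fun x : J => (hJ x.1).1 x.2
  let φ : J →ₗ[k] k :=
    { toFun := g
      map_add' := fun x y => huniq _ _ _ (hg _) (by
        have := K.add_mem (hg x) (hg y)
        simpa [add_comm] using this)
      map_smul' := fun c x => huniq _ _ _ (hg _) (by
        have := K.smul_mem c (hg x)
        simpa using this) }
  have hφ : ∀ x : J, (φ x, -x.1) ∈ K := hg
  have key : ∀ (x : I) (a : k), (a, -x) ∈ K → ∃ h : x ∈ J, φ ⟨x, h⟩ = a := fun x a h =>
    ⟨(hJ x).2 ⟨a, h⟩, huniq _ _ _ (hφ _) h⟩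
  have hl : ∀ (x : J) (y : I), ((0 : k), φ x • y - mI x.1 y) ∈ K := by
    intro x y
    have := (hK _ (hφ x) (0, y)).1
    simpa [unitMul, sub_eq_add_neg] using this
  have hr : ∀ (x : J) (y : I), ((0 : k), φ x • y - mI y x.1) ∈ K := by
    intro x y
    have := (hK _ (hφ x) (0, y)).2
    simpa [unitMul, sub_eq_add_neg] using this
  refine ⟨J, φ, ?_, ?_, ?_, ?_⟩
  · push Not at h0
    obtain ⟨⟨a, x⟩, hp, hne⟩ := h0
    obtain ⟨h, h'⟩ := key (-x) a (by simpa using hp)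
    intro c
    refine ⟨(c * a⁻¹) • ⟨-x, h⟩, ?_⟩
    rw [map_smul, h', smul_eq_mul, inv_mul_cancel_right₀ hne]
  · intro x y
    apply key
    have h2 := K.add_mem (K.add_mem (hK _ (hφ x) (φ y, -y.1)).1 (hl x y)) (hr y x)
    convert h2 using 1
    ext
    · simp [unitMul]
    · simp [unitMul]
      abel
  · intro x y
    constructor
    · apply key
      have := K.neg_mem (hl x y)
      simpa using this
    · apply key
      have := K.neg_mem (hr x y)
      simpa using this
  · ext ⟨a, x⟩
    constructor
    · intro h
      exact key (-x) a (by simpa using h)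
    · rintro ⟨h, h'⟩
      have := hφ ⟨-x, h⟩
      rw [h'] at this
      simpa using this
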